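/- Let X be a Stein space and let (K_j)_{j∈ℕ} be a decreasing sequence of compact subsets of X with ⋂_{j∈ℕ} K_j = K. Then h_{K_j,X} increases pointwise to h_{K,X}. -/

import Mathlib

/-!
Common framework: plurisubharmonic functions, (reduced) complex spaces modeled by
charts onto analytic subvarieties of open subsets of finite-dimensional complex
normed spaces, relative extremal functions, pluripolarity, Stein spaces,
Monge–Ampère operators, and crosses in products of complex spaces.
-/

open Set Filter Topology Metric

noncomputable section

/-- `ℂⁿ`, modeled as functions `Fin n → ℂ`. -/
abbrev Cn (n : ℕ) : Type := Fin n → ℂ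

/-- A real-valued function is harmonic on a subset of `ℂ` if it is locally
the real part of a holomorphic function. -/
def HarmonicOnCC (h : ℂ → ℝ) (Ω : Set ℂ) : Prop :=
  ∀ z ∈ Ω, ∃ W : Set ℂ, IsOpen W ∧ z ∈ W ∧ W ⊆ Ω ∧
    ∃ f : ℂ → ℂ, DifferentiableOn ℂ f W ∧ ∀ w ∈ W, h w = (f w).re

/-- Subharmonicity for `[-∞,∞)`-valued functions (modeled as `EReal`-valued, with value
`⊤` excluded in applications): upper semicontinuity together with domination on closed
discs by harmonic comparison functions. -/
def SubharmonicOnCC (u : ℂ → EReal) (Ω : Set ℂ) : Prop :=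
  UpperSemicontinuousOn u Ω ∧
  ∀ (a : ℂ) (r : ℝ), 0 < r → closedBall a r ⊆ Ω →
    ∀ h : ℂ → ℝ, ContinuousOn h (closedBall a r) → HarmonicOnCC h (ball a r) →
      (∀ z ∈ sphere a r, u z ≤ (h z : EReal)) →
      ∀ z ∈ closedBall a r, u z ≤ (h z : EReal)

section NormedE

variable {E : Type*} [NormedAddCommGroup E] [NormedSpace ℂ E]

/-- Plurisubharmonicity on an open subset `Ω` of a complex normed space: the function is
`< ⊤`, upper semicontinuous, not identically `-∞` on any nonempty open subset (equivalently,
on no irreducible = connected component of `Ω`), and subharmonic along every complex line. -/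
def PSHOnE (u : E → EReal) (Ω : Set E) : Prop :=
  (∀ z ∈ Ω, u z < ⊤) ∧ UpperSemicontinuousOn u Ω ∧
  (¬ ∃ U : Set E, U ⊆ Ω ∧ IsOpen U ∧ U.Nonempty ∧ ∀ z ∈ U, u z = ⊥) ∧
  ∀ a b : E, SubharmonicOnCC (fun w : ℂ => u (a + w • b)) {w : ℂ | a + w • b ∈ Ω}

/-- Strong (strict) plurisubharmonicity of a real-valued function: locally, subtracting a
small multiple of `‖z‖²` preserves plurisubharmonicity. -/
def StronglyPSHOnE (u : E → ℝ) (Ω : Set E) : Prop :=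
  ∀ x ∈ Ω, ∃ ε : ℝ, 0 < ε ∧ ∃ U : Set E, IsOpen U ∧ x ∈ U ∧ U ⊆ Ω ∧
    PSHOnE (fun z => ((u z - ε * ‖z‖ ^ 2 : ℝ) : EReal)) U

/-- An analytic subvariety `B` of an open set `V`: locally the common zero locus of
finitely many holomorphic functions. -/
def IsSubvariety (B V : Set E) : Prop :=
  IsOpen V ∧ B ⊆ V ∧
  ∀ z ∈ V, ∃ W : Set E, IsOpen W ∧ z ∈ W ∧ W ⊆ V ∧
    ∃ (m : ℕ) (F : Fin m → E → ℂ), (∀ i, DifferentiableOn ℂ (F i) W) ∧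
      B ∩ W = {w ∈ W | ∀ i, F i w = 0}

end NormedE

/-- A chart `(U, φ, B, V)` of a complex space `X`: a homeomorphism `φ` of an open set
`U ⊆ X` onto an analytic subvariety `B` of an open subset `V` of a finite-dimensional
complex normed space. -/
structure CChart (X : Type*) [TopologicalSpace X] where
  E : Type
  [nacg : NormedAddCommGroup E]
  [nsp : NormedSpace ℂ E]
  [fd : FiniteDimensional ℂ E]
  U : Set X
  V : Set E
  B : Set E
  φ : X → E
  openU : IsOpen U
  subvariety : IsSubvariety B V
  mapsToB : ∀ x ∈ U, φ x ∈ B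
  injOn : Set.InjOn φ U
  image_eq : φ '' U = B
  contOn : ContinuousOn φ U
  open_image : ∀ W : Set X, W ⊆ U → IsOpen W → ∃ V'' : Set E, IsOpen V'' ∧ φ '' W = B ∩ V''

attribute [instance] CChart.nacg CChart.nsp CChart.fd

/-- Holomorphic compatibility of two charts: the transition map extends to a holomorphic
map of ambient open sets near every point of the overlap. -/
def ChartCompat {X : Type*} [TopologicalSpace X] (c d : CChart X) : Prop :=
  ∀ x ∈ c.U ∩ d.U, ∃ W : Set c.E, IsOpen W ∧ c.φ x ∈ W ∧
    ∃ F : c.E → d.E, DifferentiableOn ℂ F W ∧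
      ∀ y ∈ c.U ∩ d.U, c.φ y ∈ W → F (c.φ y) = d.φ y

/-- A (reduced) complex space structure on a topological space `X`: an atlas of pairwise
holomorphically compatible charts onto analytic subvarieties covering `X`. -/
structure CSpace (X : Type*) [TopologicalSpace X] where
  atlas : Set (CChart X)
  chart_cover : ∀ x : X, ∃ c ∈ atlas, x ∈ c.U
  compat : ∀ c ∈ atlas, ∀ d ∈ atlas, ChartCompat c d

section Space

variable {X : Type*} [TopologicalSpace X]

/-- A function `f` is holomorphic on an open subset `D` of the complex space: near every
point it is, in some chart, the restriction of an ambient holomorphic function. -/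
def SpaceHolOn (S : CSpace X) (f : X → ℂ) (D : Set X) : Prop :=
  ∀ x ∈ D, ∃ c ∈ S.atlas, x ∈ c.U ∧ ∃ V' : Set c.E, IsOpen V' ∧ V' ⊆ c.V ∧ c.φ x ∈ V' ∧
    {y ∈ c.U | c.φ y ∈ V'} ⊆ D ∧
    ∃ F : c.E → ℂ, DifferentiableOn ℂ F V' ∧ ∀ y ∈ c.U, c.φ y ∈ V' → F (c.φ y) = f y

/-- A holomorphic map from a subset of `ℂ` into a complex space: continuous, and
holomorphic when read in any chart. -/
def HolMapTo (S : CSpace X) (f : ℂ → X) (Ω : Set ℂ) : Prop :=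
  ContinuousOn f Ω ∧
  ∀ c ∈ S.atlas, DifferentiableOn ℂ (fun w => c.φ (f w)) (Ω ∩ f ⁻¹' c.U)

/-- An analytic subset `A` of an open subset `D` of a complex space: locally (in charts)
cut out in `D` by finitely many holomorphic equations. -/
def IsAnalyticIn (S : CSpace X) (A D : Set X) : Prop :=
  A ⊆ D ∧ ∀ x ∈ D, ∃ c ∈ S.atlas, x ∈ c.U ∧ ∃ V' : Set c.E, IsOpen V' ∧ V' ⊆ c.V ∧ c.φ x ∈ V' ∧
    ∃ (m : ℕ) (F : Fin m → c.E → ℂ), (∀ i, DifferentiableOn ℂ (F i) V') ∧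
      ∀ y ∈ c.U, c.φ y ∈ V' → y ∈ D → (y ∈ A ↔ ∀ i, F i (c.φ y) = 0)

/-- Irreducibility of the open subset `D` of a complex space. -/
def IsIrreducibleIn (S : CSpace X) (D : Set X) : Prop :=
  D.Nonempty ∧ ∀ A₁ A₂ : Set X, IsAnalyticIn S A₁ D → IsAnalyticIn S A₂ D →
    A₁ ∪ A₂ = D → A₁ = D ∨ A₂ = D

/-- An irreducible analytic subset of `D`. -/
def IsIrreducibleAnalyticIn (S : CSpace X) (C D : Set X) : Prop :=
  IsAnalyticIn S C D ∧ C.Nonempty ∧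
  ∀ A₁ A₂ : Set X, IsAnalyticIn S A₁ D → IsAnalyticIn S A₂ D →
    C ⊆ A₁ ∪ A₂ → C ⊆ A₁ ∨ C ⊆ A₂

/-- An irreducible component of `D`: a maximal irreducible analytic subset. -/
def IsIrredComponentIn (S : CSpace X) (C D : Set X) : Prop :=
  IsIrreducibleAnalyticIn S C D ∧
  ∀ C' : Set X, IsIrreducibleAnalyticIn S C' D → C ⊆ C' → C' = C

/-- Local irreducibility (on `D`): every point has arbitrarily small irreducible open
neighborhoods. -/
def IsLocallyIrreducibleIn (S : CSpace X) (D : Set X) : Prop :=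
  ∀ x ∈ D, ∀ W : Set X, IsOpen W → x ∈ W →
    ∃ D' : Set X, IsOpen D' ∧ x ∈ D' ∧ D' ⊆ W ∩ D ∧ IsIrreducibleIn S D'

/-- Plurisubharmonicity of `u : X → [-∞,∞)` on an open subset `D` of a complex space:
`u` is not identically `-∞` on any irreducible component of `D` and, locally in charts,
`u` is the restriction of an ambient plurisubharmonic function. -/
def SpacePSHOn (S : CSpace X) (u : X → EReal) (D : Set X) : Prop :=
  (∀ x ∈ D, u x < ⊤) ∧
  (∀ C : Set X, IsIrredComponentIn S C D → ∃ x ∈ C, u x ≠ ⊥) ∧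
  ∀ x ∈ D, ∃ c ∈ S.atlas, x ∈ c.U ∧ ∃ V' : Set c.E, IsOpen V' ∧ V' ⊆ c.V ∧ c.φ x ∈ V' ∧
    {y ∈ c.U | c.φ y ∈ V'} ⊆ D ∧
    ∃ ψ : c.E → EReal, PSHOnE ψ V' ∧ ∀ y ∈ c.U, c.φ y ∈ V' → ψ (c.φ y) = u y

/-- Real analyticity on an open subset of a complex space, via charts. -/
def SpaceRealAnalyticOn (S : CSpace X) (f : X → ℝ) (D : Set X) : Prop :=
  ∀ x ∈ D, ∃ c ∈ S.atlas, x ∈ c.U ∧ ∃ V' : Set c.E, IsOpen V' ∧ V' ⊆ c.V ∧ c.φ x ∈ V' ∧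
    {y ∈ c.U | c.φ y ∈ V'} ⊆ D ∧
    ∃ g : c.E → ℝ, AnalyticOnNhd ℝ g V' ∧ ∀ y ∈ c.U, c.φ y ∈ V' → g (c.φ y) = f y

/-- Strong plurisubharmonicity on an open subset of a complex space, via charts. -/
def SpaceStronglyPSHOn (S : CSpace X) (f : X → ℝ) (D : Set X) : Prop :=
  ∀ x ∈ D, ∃ c ∈ S.atlas, x ∈ c.U ∧ ∃ V' : Set c.E, IsOpen V' ∧ V' ⊆ c.V ∧ c.φ x ∈ V' ∧
    {y ∈ c.U | c.φ y ∈ V'} ⊆ D ∧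
    ∃ g : c.E → ℝ, StronglyPSHOnE g V' ∧ ∀ y ∈ c.U, c.φ y ∈ V' → g (c.φ y) = f y

/-- `ψ` is an exhaustion function of `D`: all sublevel sets are relatively compact in `D`. -/
def IsExhaustionOn (ψ : X → ℝ) (D : Set X) : Prop :=
  ∀ c : ℝ, IsCompact (closure {x ∈ D | ψ x < c}) ∧ closure {x ∈ D | ψ x < c} ⊆ D

/-- The holomorphically convex hull of `K` with respect to holomorphic functions on the
open set `G`. -/
def holHull (S : CSpace X) (K G : Set X) : Set X :=
  {x ∈ G | ∀ f : X → ℂ, SpaceHolOn S f G → ‖f x‖ ≤ sSup ((fun y => ‖f y‖) '' K)}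

/-- The open subset `G` of the complex space is Stein: holomorphically convex and
holomorphically separable. -/
def IsSteinIn (S : CSpace X) (G : Set X) : Prop :=
  (∀ K : Set X, K ⊆ G → IsCompact K → IsCompact (holHull S K G)) ∧
  ∀ x ∈ G, ∀ y ∈ G, x ≠ y → ∃ f : X → ℂ, SpaceHolOn S f G ∧ f x ≠ f y

/-- All points of `D` are manifold points (charts onto open subsets of complex normed
spaces). -/
def IsManifoldIn (S : CSpace X) (D : Set X) : Prop :=
  ∀ x ∈ D, ∃ c ∈ S.atlas, x ∈ c.U ∧ c.B = c.V

/-- The function `h_{A,D}` of Definition 2.8 (before regularization). -/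
def relExtRaw (S : CSpace X) (A D : Set X) : X → EReal := fun z =>
  ⨆ u ∈ {u : X → EReal | SpacePSHOn S u D ∧ (∀ x ∈ D, u x ≤ 1) ∧ ∀ x ∈ A, u x ≤ 0}, u z

/-- The relative extremal function `h*_{A,D}`: the upper semicontinuous regularization
(within `D`) of `h_{A,D}`. -/
def relExt (S : CSpace X) (A D : Set X) : X → EReal := fun z =>
  limsup (relExtRaw S A D) (𝓝[D] z)

/-- `P` is (locally) pluripolar in the open set `D`. -/
def IsPluripolarIn (S : CSpace X) (P D : Set X) : Prop :=
  ∀ x ∈ P, ∃ U : Set X, IsOpen U ∧ x ∈ U ∧ U ⊆ D ∧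
    ∃ u : X → EReal, SpacePSHOn S u U ∧ ∀ y ∈ P ∩ U, u y = ⊥

/-- `A` is pluriregular at the point `a`. -/
def PluriregularAt (S : CSpace X) (A : Set X) (a : X) : Prop :=
  a ∈ closure A ∧ ∀ U : Set X, IsOpen U → a ∈ U → relExt S (A ∩ U) U a = 0

/-- `A` is locally pluriregular: nonempty and pluriregular at each of its points. -/
def LocallyPluriregular (S : CSpace X) (A : Set X) : Prop :=
  A.Nonempty ∧ ∀ a ∈ A, PluriregularAt S A a

/-- A Josefson manifold: a complex manifold on which every (locally) pluripolar set is
globally pluripolar. -/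
def IsJosefsonManifold (S : CSpace X) : Prop :=
  IsManifoldIn S univ ∧ ∀ P : Set X, IsPluripolarIn S P univ →
    ∃ u : X → EReal, SpacePSHOn S u univ ∧ ∀ x ∈ P, u x = ⊥

/-- Local (two-sided) boundedness of an `EReal`-valued function on `D`. -/
def LocBoundedOn (u : X → EReal) (D : Set X) : Prop :=
  ∀ x ∈ D, ∃ U : Set X, IsOpen U ∧ x ∈ U ∧
    ∃ m M : ℝ, ∀ y ∈ U ∩ D, (m : EReal) ≤ u y ∧ u y ≤ (M : EReal)

/-- (Global) boundedness of an `EReal`-valued function on `D`. -/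
def BoundedOn (u : X → EReal) (D : Set X) : Prop :=
  ∃ m M : ℝ, ∀ y ∈ D, (m : EReal) ≤ u y ∧ u y ≤ (M : EReal)

/-- `E` is locally `L`-regular (in the sense of Zeriahi): each of its points has a basis of
open neighborhoods in which the corresponding relative extremal functions are continuous
and vanish on `E`. -/
def LocallyLRegular (S : CSpace X) (E : Set X) : Prop :=
  ∀ x ∈ E, ∀ W : Set X, IsOpen W → x ∈ W →
    ∃ U₀ : Set X, IsOpen U₀ ∧ x ∈ U₀ ∧ U₀ ⊆ W ∧
      ContinuousOn (relExt S (E ∩ U₀) U₀) U₀ ∧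
      ∀ y ∈ E ∩ U₀, relExt S (E ∩ U₀) U₀ y = 0

end Space

open MeasureTheory

/-! ### The complex Monge–Ampère operator -/

/-- Second directional derivative. -/
def d2 {n : ℕ} (u : Cn n → ℝ) (z v w : Cn n) : ℝ :=
  fderiv ℝ (fun x => fderiv ℝ u x v) z w

/-- The complex Hessian `(∂²u/∂z_j ∂z̄_k)_{j,k}` of a real-valued function on `ℂⁿ`. -/
def cHess {n : ℕ} (u : Cn n → ℝ) (z : Cn n) : Matrix (Fin n) (Fin n) ℂ :=
  Matrix.of fun j k =>
    (((d2 u z (Pi.single j 1) (Pi.single k 1) +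
        d2 u z (Pi.single j Complex.I) (Pi.single k Complex.I) : ℝ) : ℂ) +
      Complex.I * ((d2 u z (Pi.single j 1) (Pi.single k Complex.I) -
        d2 u z (Pi.single j Complex.I) (Pi.single k 1) : ℝ) : ℂ)) / 4

/-- The density of `(dd^c u)^n` for a smooth `u`. -/
def maDensity {n : ℕ} (u : Cn n → ℝ) (z : Cn n) : ℝ :=
  (4 : ℝ) ^ n * (n.factorial : ℝ) * ((cHess u z).det).re

/-- The Monge–Ampère measure `(dd^c u)^n` of a smooth function on `ℂⁿ`. -/
def smoothMA {n : ℕ} (u : Cn n → ℝ) : Measure (Cn n) :=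
  volume.withDensity fun z => ENNReal.ofReal (maDensity u z)

/-- `μ` is the Bedford–Taylor Monge–Ampère measure `(dd^c u)^n` of a locally bounded
plurisubharmonic `u` on the open set `Ω ⊆ ℂⁿ`: `μ` is carried by `Ω` and is the weak-*
limit of the Monge–Ampère measures of any decreasing smooth plurisubharmonic
approximation of `u`. -/
def IsMAOn {n : ℕ} (u : Cn n → EReal) (Ω : Set (Cn n)) (μ : Measure (Cn n)) : Prop :=
  (∀ A : Set (Cn n), MeasurableSet A → Disjoint A Ω → μ A = 0) ∧
  ∀ v : ℕ → Cn n → ℝ, (∀ j, ContDiff ℝ (⊤ : ℕ∞) (v j)) →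
    (∀ j, PSHOnE (fun z => ((v j z : ℝ) : EReal)) Ω) →
    (∀ z ∈ Ω, Antitone fun j => v j z) →
    (∀ z ∈ Ω, Tendsto (fun j => ((v j z : ℝ) : EReal)) atTop (𝓝 (u z))) →
    ∀ f : Cn n → ℝ, Continuous f → HasCompactSupport f → tsupport f ⊆ Ω →
      Tendsto (fun j => ∫ z, f z ∂(smoothMA (v j))) atTop (𝓝 (∫ z, f z ∂μ))

section SpaceMA

variable {X : Type*} [TopologicalSpace X]

/-- A holomorphic local coordinate system of dimension `n` on a complex space: a
homeomorphism `ρ` of an open `U₀ ⊆ X` onto an open `Ω₀ ⊆ ℂⁿ` which identifies the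
holomorphic functions on both sides. -/
def IsLocalCoord (S : CSpace X) (n : ℕ) (U₀ : Set X) (ρ : X → Cn n) (Ω₀ : Set (Cn n)) :
    Prop :=
  IsOpen U₀ ∧ IsOpen Ω₀ ∧ ρ '' U₀ = Ω₀ ∧ InjOn ρ U₀ ∧ ContinuousOn ρ U₀ ∧
  (∀ W : Set X, W ⊆ U₀ → IsOpen W → IsOpen (ρ '' W)) ∧
  (∀ j : Fin n, SpaceHolOn S (fun x => ρ x j) U₀) ∧
  ∀ f : X → ℂ, SpaceHolOn S f U₀ →
    ∃ F : Cn n → ℂ, DifferentiableOn ℂ F Ω₀ ∧ ∀ x ∈ U₀, F (ρ x) = f x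

/-- The set of regular points of dimension `n`. -/
def RegLocus (S : CSpace X) (n : ℕ) : Set X :=
  {x | ∃ (U₀ : Set X) (ρ : X → Cn n) (Ω₀ : Set (Cn n)), IsLocalCoord S n U₀ ρ Ω₀ ∧ x ∈ U₀}

/-- The open set `D` has pure dimension `n`: its `n`-dimensional regular points are dense
in it and it has regular points of no other dimension. -/
def PureDimensionIn (S : CSpace X) (D : Set X) (n : ℕ) : Prop :=
  D ⊆ closure (RegLocus S n ∩ D) ∧ ∀ k : ℕ, (RegLocus S k ∩ D).Nonempty → k = n

/-- `μ` is the Monge–Ampère measure `(dd^c u)^n` of `u` on the open subset `D` of a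
complex space: it is carried by the regular part of `D` (i.e. extended by zero through
the singular set) and corresponds, in every local coordinate system, to the
Monge–Ampère measure in `ℂⁿ`. -/
def IsMAOnSpace [MeasurableSpace X] (S : CSpace X) (n : ℕ) (u : X → EReal) (D : Set X)
    (μ : Measure X) : Prop :=
  (∀ A : Set X, MeasurableSet A → Disjoint A D → μ A = 0) ∧
  (∀ A : Set X, MeasurableSet A → A ⊆ D → Disjoint A (RegLocus S n) → μ A = 0) ∧
  ∀ (U₀ : Set X) (ρ : X → Cn n) (Ω₀ : Set (Cn n)), IsLocalCoord S n U₀ ρ Ω₀ → U₀ ⊆ D →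
    ∃ (uu : Cn n → EReal) (ν : Measure (Cn n)),
      (∀ x ∈ U₀, uu (ρ x) = u x) ∧ IsMAOn uu Ω₀ ν ∧
      ∀ A : Set X, MeasurableSet A → A ⊆ U₀ → μ A = ν (ρ '' A)

/-- `log` with values in `[-∞, ∞)`. -/
def elog (t : ℝ) : EReal := if t ≤ 0 then ⊥ else ((Real.log t : ℝ) : EReal)

/-- `g` is a parabolic potential on `D`: a nonnegative continuous plurisubharmonic
exhaustion function of `D` such that `log g` is plurisubharmonic and maximal
(`(dd^c log g)^n = 0`) off the zero set of `g`.  A Stein space possessing such a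
potential is called weakly parabolic. -/
def WeaklyParabolicIn [MeasurableSpace X] (S : CSpace X) (n : ℕ) (g : X → ℝ) (D : Set X) :
    Prop :=
  (∀ x ∈ D, 0 ≤ g x) ∧ ContinuousOn g D ∧
  SpacePSHOn S (fun x => ((g x : ℝ) : EReal)) D ∧
  IsExhaustionOn g D ∧
  SpacePSHOn S (fun x => elog (g x)) D ∧
  IsMAOnSpace S n (fun x => elog (g x)) {x ∈ D | g x ≠ 0} (0 : Measure X)

end SpaceMA

/-! ### Products of complex spaces, generalized crosses -/

section Pi

variable {ι : Type*} [Fintype ι] {Z : ι → Type*} [∀ i, TopologicalSpace (Z i)]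

/-- Holomorphy of a function on an open subset of a finite product of complex spaces,
via products of charts. -/
def PiHolOn (T : ∀ i, CSpace (Z i)) (f : (∀ i, Z i) → ℂ) (Ω : Set (∀ i, Z i)) : Prop :=
  ∀ w ∈ Ω, ∃ c : ∀ i, CChart (Z i), (∀ i, c i ∈ (T i).atlas) ∧ (∀ i, w i ∈ (c i).U) ∧
    ∃ V' : Set (∀ i, (c i).E), IsOpen V' ∧ (fun i => (c i).φ (w i)) ∈ V' ∧
      {y : ∀ i, Z i | (∀ i, y i ∈ (c i).U) ∧ (fun i => (c i).φ (y i)) ∈ V'} ⊆ Ω ∧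
      ∃ F : (∀ i, (c i).E) → ℂ, DifferentiableOn ℂ F V' ∧
        ∀ y : ∀ i, Z i, (∀ i, y i ∈ (c i).U) → ((fun i => (c i).φ (y i)) ∈ V') →
          F (fun i => (c i).φ (y i)) = f y

/-- Plurisubharmonicity on an open subset of a finite product of complex spaces, via
products of charts. -/
def PiPSHOn (T : ∀ i, CSpace (Z i)) (u : (∀ i, Z i) → EReal) (Ω : Set (∀ i, Z i)) : Prop :=
  (∀ z ∈ Ω, u z < ⊤) ∧
  (¬ ∃ U : Set (∀ i, Z i), U ⊆ Ω ∧ IsOpen U ∧ U.Nonempty ∧ ∀ z ∈ U, u z = ⊥) ∧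
  ∀ w ∈ Ω, ∃ c : ∀ i, CChart (Z i), (∀ i, c i ∈ (T i).atlas) ∧ (∀ i, w i ∈ (c i).U) ∧
    ∃ V' : Set (∀ i, (c i).E), IsOpen V' ∧ (fun i => (c i).φ (w i)) ∈ V' ∧
      {y : ∀ i, Z i | (∀ i, y i ∈ (c i).U) ∧ (fun i => (c i).φ (y i)) ∈ V'} ⊆ Ω ∧
      ∃ ψ : (∀ i, (c i).E) → EReal, PSHOnE ψ V' ∧
        ∀ y : ∀ i, Z i, (∀ i, y i ∈ (c i).U) → ((fun i => (c i).φ (y i)) ∈ V') →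
          ψ (fun i => (c i).φ (y i)) = u y

/-- The function `h_{A,D}` on a product of complex spaces. -/
def PiRelExtRaw (T : ∀ i, CSpace (Z i)) (A D : Set (∀ i, Z i)) : (∀ i, Z i) → EReal :=
  fun z =>
    ⨆ u ∈ {u : (∀ i, Z i) → EReal |
      PiPSHOn T u D ∧ (∀ x ∈ D, u x ≤ 1) ∧ ∀ x ∈ A, u x ≤ 0}, u z

/-- The relative extremal function `h*_{A,D}` on a product of complex spaces. -/
def PiRelExt (T : ∀ i, CSpace (Z i)) (A D : Set (∀ i, Z i)) : (∀ i, Z i) → EReal :=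
  fun z => limsup (PiRelExtRaw T A D) (𝓝[D] z)

/-- Pluripolar subsets of a finite product of complex spaces. -/
def PiPluripolar (T : ∀ i, CSpace (Z i)) (P : Set (∀ i, Z i)) : Prop :=
  ∀ w ∈ P, ∃ U : Set (∀ i, Z i), IsOpen U ∧ w ∈ U ∧
    ∃ u : (∀ i, Z i) → EReal, PiPSHOn T u U ∧ ∀ y ∈ P ∩ U, u y = ⊥

end Pi

section Cross

variable {N : ℕ} {X : Fin N → Type*}

/-- The number of `1`-entries of `α`; `α ∈ I(N,k)` iff `idxCard α = k`. -/
def idxCard (α : Fin N → Bool) : ℕ := (Finset.univ.filter fun j => α j = true).card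

/-- `i_{a,α}`: the point of the product whose coordinates are those of `z` where
`α j = 1` and those of `a` where `α j = 0`. -/
def insertCoords (α : Fin N → Bool) (a : ∀ j : {j : Fin N // α j = false}, X j.1)
    (z : ∀ j : {j : Fin N // α j = true}, X j.1) : ∀ j, X j :=
  fun j => if h : α j = true then z ⟨j, h⟩ else a ⟨j, Bool.eq_false_iff.mpr h⟩

/-- The projection `a ↦ a_α^0` onto the coordinates with `α j = 0`. -/
def proj0 (α : Fin N → Bool) (w : ∀ j, X j) : ∀ j : {j : Fin N // α j = false}, X j.1 :=
  fun j => w j.1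

/-- The set `A_α` (the product of the `A_j` with `α_j = 0`). -/
def piASet (A : ∀ j, Set (X j)) (α : Fin N → Bool) :
    Set (∀ j : {j : Fin N // α j = false}, X j.1) :=
  {a | ∀ j, a j ∈ A j.1}

/-- The generalized `(N,k)`-cross `T_{N,k}((A_j, X_j)_j, (Σ_α)_α)` (with `D_j = X_j`). -/
def crossT (A : ∀ j, Set (X j)) (k : ℕ)
    (Sig : ∀ α : Fin N → Bool, Set (∀ j : {j : Fin N // α j = false}, X j.1)) :
    Set (∀ j, X j) :=
  {w | ∃ α : Fin N → Bool, idxCard α = k ∧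
    (∀ j : {j : Fin N // α j = false}, w j.1 ∈ A j.1) ∧ proj0 α w ∉ Sig α}

variable [∀ j, TopologicalSpace (X j)]

/-- `f ∈ 𝒪_s(T_{N,k})`: separate holomorphy on the generalized `(N,k)`-cross. -/
def SepHol (S : ∀ j, CSpace (X j)) (A : ∀ j, Set (X j)) (k : ℕ)
    (Sig : ∀ α : Fin N → Bool, Set (∀ j : {j : Fin N // α j = false}, X j.1))
    (f : (∀ j, X j) → ℂ) : Prop :=
  ∀ α : Fin N → Bool, idxCard α = k →
    ∀ a : ∀ j : {j : Fin N // α j = false}, X j.1, a ∈ piASet A α → a ∉ Sig α →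
      PiHolOn (fun j : {j : Fin N // α j = true} => S j.1)
        (fun z => f (insertCoords α a z)) univ

/-- `f ∈ 𝒪_s^c(T_{N,k})`: separately holomorphic, and continuous on `A_α \ Σ_α` in the
remaining variables. -/
def SepHolC (S : ∀ j, CSpace (X j)) (A : ∀ j, Set (X j)) (k : ℕ)
    (Sig : ∀ α : Fin N → Bool, Set (∀ j : {j : Fin N // α j = false}, X j.1))
    (f : (∀ j, X j) → ℂ) : Prop :=
  SepHol S A k Sig f ∧
  ∀ α : Fin N → Bool, idxCard α = k →
    ∀ b : ∀ j : {j : Fin N // α j = true}, X j.1,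
      ContinuousOn (fun a : ∀ j : {j : Fin N // α j = false}, X j.1 =>
        f (insertCoords α a b)) (piASet A α \ Sig α)

/-- The envelope `X̂_{N,k}` of the `(N,k)`-cross. -/
def crossEnvelope (S : ∀ j, CSpace (X j)) (A : ∀ j, Set (X j))
    (k : ℝ) : Set (∀ j, X j) :=
  {z | (∑ j, relExt (S j) (A j) univ (z j)) < ((k : ℝ) : EReal)}

end Cross

/-!
Let `u` be a competitor for `h_{K,D}`, where `K = ⋂ K_i`, and let `ε > 0`. By upper semicontinuity
`{u < ε}` is an open neighbourhood of `K`, so by compactness it contains some `K_i`. Then `u - ε` is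
a competitor for `h_{K_i,D}`, whence `u ≤ h_{K_i,D} + ε`; now let `ε → 0`.
-/

theorem ereal_le_of_forall_pos_le_add {a b : EReal} (h : ∀ ε : ℝ, 0 < ε → a ≤ b + ε) : a ≤ b := by
  induction b with
  | bot => simpa only [EReal.bot_add] using h 1 one_pos
  | coe r =>
    refine EReal.le_of_forall_lt_iff_le.1 fun s hrs => ?_
    have hle := h (s - r) (sub_pos.2 (EReal.coe_lt_coe_iff.1 hrs))
    rwa [← EReal.coe_add, add_sub_cancel] at hle
  | top => exact le_top

theorem ereal_add_coe_le_iff_le_sub {a b : EReal} {c : ℝ} : a + c ≤ b ↔ a ≤ b - c :=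
  (EReal.le_sub_iff_add_le (.inl (EReal.coe_ne_bot c)) (.inl (EReal.coe_ne_top c))).symm

theorem continuous_ereal_add_coe (c : ℝ) : Continuous fun a : EReal => a + c :=
  continuous_iff_continuousAt.2 fun a =>
    (EReal.continuousAt_add (p := (a, (c : EReal))) (.inr (EReal.coe_ne_bot c))
      (.inr (EReal.coe_ne_top c))).comp (f := fun a : EReal => (a, (c : EReal))) (by fun_prop)

theorem upperSemicontinuousOn_add_coe {α : Type*} [TopologicalSpace α] {u : α → EReal} {s : Set α}
    (hu : UpperSemicontinuousOn u s) (c : ℝ) : UpperSemicontinuousOn (fun x => u x + c) s :=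
  (continuous_ereal_add_coe c).comp_upperSemicontinuousOn hu fun _ _ h => add_le_add_left h _

theorem isOpen_setOf_mem_and_lt {α β : Type*} [TopologicalSpace α] [Preorder β] {u : α → β}
    {s : Set α} (hs : IsOpen s) (hu : UpperSemicontinuousOn u s) (t : β) :
    IsOpen {x ∈ s | u x < t} :=
  isOpen_iff_mem_nhds.2 fun x ⟨hxs, hxt⟩ =>
    inter_mem (hs.mem_nhds hxs) (hs.nhdsWithin_eq hxs ▸ hu x hxs t hxt)

theorem HarmonicOnCC.sub_const {h : ℂ → ℝ} {Ω : Set ℂ} (hh : HarmonicOnCC h Ω) (c : ℝ) :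
    HarmonicOnCC (fun z => h z - c) Ω := by
  intro z hz
  obtain ⟨W, hW, hzW, hWΩ, f, hf, hfre⟩ := hh z hz
  exact ⟨W, hW, hzW, hWΩ, fun w => f w - c, hf.sub_const _, fun w hw => by simp [hfre w hw]⟩

theorem SubharmonicOnCC.add_const {u : ℂ → EReal} {Ω : Set ℂ} (hu : SubharmonicOnCC u Ω) (c : ℝ) :
    SubharmonicOnCC (fun z => u z + c) Ω := by
  refine ⟨upperSemicontinuousOn_add_coe hu.1 c, fun a r hr hball h hcont hharm hle z hz => ?_⟩
  have hle_sub : ∀ w ∈ sphere a r, u w ≤ ((h w - c : ℝ) : EReal) := fun w hw =>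
    ereal_add_coe_le_iff_le_sub.1 (hle w hw)
  exact ereal_add_coe_le_iff_le_sub.2 <|
    hu.2 a r hr hball _ (hcont.sub continuousOn_const) (hharm.sub_const c) hle_sub z hz

theorem PSHOnE.add_const {E : Type*} [NormedAddCommGroup E] [NormedSpace ℂ E] {u : E → EReal}
    {Ω : Set E} (hu : PSHOnE u Ω) (c : ℝ) : PSHOnE (fun z => u z + c) Ω := by
  obtain ⟨hlt_top, husc, hne_bot, hsub⟩ := hu
  refine ⟨fun z hz => EReal.add_lt_top (hlt_top z hz).ne (EReal.coe_ne_top c),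
    upperSemicontinuousOn_add_coe husc c, ?_, fun a b => (hsub a b).add_const c⟩
  rintro ⟨U, hUΩ, hU, hUne, hbot⟩
  exact hne_bot ⟨U, hUΩ, hU, hUne, fun z hz => by simpa [EReal.add_eq_bot_iff] using hbot z hz⟩

section ComplexSpace

variable {X : Type*} [TopologicalSpace X] {S : CSpace X} {u : X → EReal} {A D : Set X}

theorem SpacePSHOn.add_const (hu : SpacePSHOn S u D) (c : ℝ) :
    SpacePSHOn S (fun x => u x + c) D := by
  obtain ⟨hlt_top, hne_bot, hloc⟩ := hu
  refine ⟨fun x hx => EReal.add_lt_top (hlt_top x hx).ne (EReal.coe_ne_top c), fun C hC => ?_,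
    fun x hx => ?_⟩
  · obtain ⟨x, hxC, hx⟩ := hne_bot C hC
    exact ⟨x, hxC, by simpa [EReal.add_eq_bot_iff] using hx⟩
  · obtain ⟨κ, hκ, hxκ, V, hV, hVκ, hxV, hVD, ψ, hψ, hψu⟩ := hloc x hx
    exact ⟨κ, hκ, hxκ, V, hV, hVκ, hxV, hVD, fun y => ψ y + c, hψ.add_const c,
      fun y hy hyV => congrArg (· + (c : EReal)) (hψu y hy hyV)⟩

theorem SpacePSHOn.upperSemicontinuousOn (hu : SpacePSHOn S u D) : UpperSemicontinuousOn u D := by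
  intro x hx t ht
  obtain ⟨κ, -, hxκ, V, hV, -, hxV, -, ψ, hψ, hψu⟩ := hu.2.2 x hx
  have hφ : ContinuousAt κ.φ x := κ.contOn.continuousAt (κ.openU.mem_nhds hxκ)
  have hψ_lt : ∀ᶠ w in 𝓝 (κ.φ x), ψ w < t :=
    hV.nhdsWithin_eq hxV ▸ hψ.2.1 _ hxV t ((hψu x hxκ hxV).trans_lt ht)
  filter_upwards [nhdsWithin_le_nhds (hφ.eventually hψ_lt),
    nhdsWithin_le_nhds (hφ.eventually (hV.mem_nhds hxV)),
    nhdsWithin_le_nhds (κ.openU.mem_nhds hxκ)] with y hy_lt hyV hyκ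
  rwa [← hψu y hyκ hyV]

theorem SpacePSHOn.le_relExtRaw (hu : SpacePSHOn S u D) (hu_one : ∀ x ∈ D, u x ≤ 1)
    (hu_zero : ∀ x ∈ A, u x ≤ 0) : u ≤ relExtRaw S A D := fun z =>
  le_iSup₂_of_le (f := fun (v : X → EReal) _ => v z) u ⟨hu, hu_one, hu_zero⟩ le_rfl

theorem SpacePSHOn.le_relExtRaw_add {ε : ℝ} (hu : SpacePSHOn S u D) (hu_one : ∀ x ∈ D, u x ≤ 1)
    (hε : 0 ≤ ε) (hu_eps : ∀ x ∈ A, u x ≤ ε) (z : X) : u z ≤ relExtRaw S A D z + ε := by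
  have hle : (fun x => u x + (-ε : ℝ)) ≤ relExtRaw S A D := by
    refine (hu.add_const (-ε)).le_relExtRaw (fun x hx => ?_) fun x hx => ?_
    · exact add_le_of_le_of_nonpos (hu_one x hx) (EReal.coe_nonpos.2 (neg_nonpos.2 hε))
    · exact EReal.sub_nonpos.2 (hu_eps x hx)
  simpa only [EReal.coe_neg, sub_eq_add_neg, neg_neg] using ereal_add_coe_le_iff_le_sub.1 (hle z)

theorem relExtRaw_antitone (S : CSpace X) (D : Set X) : Antitone fun A => relExtRaw S A D :=
  fun _ _ hAB _ => iSup₂_le fun _ ⟨hu, hu_one, hu_zero⟩ =>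
    hu.le_relExtRaw hu_one (fun x hx => hu_zero x (hAB hx)) _

theorem relExtRaw_iInter_eq_iSup [T2Space X] {ι : Type*} [Nonempty ι] {K : ι → Set X}
    (hD : IsOpen D) (hK : ∀ i, IsCompact (K i)) (hKdir : Directed (· ⊇ ·) K)
    (hKD : ⋂ i, K i ⊆ D) : relExtRaw S (⋂ i, K i) D = ⨆ i, relExtRaw S (K i) D := by
  refine le_antisymm (fun z => iSup₂_le fun u ⟨hu, hu_one, hu_zero⟩ => ?_)
    (iSup_le fun i => relExtRaw_antitone S D (iInter_subset K i))
  refine ereal_le_of_forall_pos_le_add fun ε hε => ?_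
  have hopen : IsOpen {x ∈ D | u x < ε} := isOpen_setOf_mem_and_lt hD hu.upperSemicontinuousOn ε
  obtain ⟨i, hi⟩ : ∃ i, K i ⊆ {x ∈ D | u x < ε} :=
    exists_subset_nhds_of_isCompact hKdir hK fun x hx =>
      hopen.mem_nhds ⟨hKD hx, (hu_zero x hx).trans_lt (EReal.coe_pos.2 hε)⟩
  calc u z ≤ relExtRaw S (K i) D z + ε :=
        hu.le_relExtRaw_add hu_one hε.le (fun x hx => (hi hx).2.le) z
    _ ≤ (⨆ i, relExtRaw S (K i) D) z + ε := by
        gcongr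
        exact le_iSup (fun i => relExtRaw S (K i) D) i z

theorem relExtRaw_of_decreasing_compacts_general [T2Space X] {ι : Type*} [Preorder ι]
    [IsDirectedOrder ι] [Nonempty ι] (S : CSpace X) (hD : IsOpen D) {K : ι → Set X}
    (hK : ∀ i, IsCompact (K i)) (hKanti : Antitone K) (hKD : ⋂ i, K i ⊆ D) :
    Monotone (fun i => relExtRaw S (K i) D) ∧
      Tendsto (fun i => relExtRaw S (K i) D) atTop (𝓝 (relExtRaw S (⋂ i, K i) D)) := by
  have hmono : Monotone fun i => relExtRaw S (K i) D := (relExtRaw_antitone S D).comp hKanti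
  rw [relExtRaw_iInter_eq_iSup hD hK hKanti.directed_ge hKD]
  exact ⟨hmono, tendsto_atTop_iSup hmono⟩

end ComplexSpace

/-- Proposition 2.14.  If `(K_j)` is a decreasing sequence of compact
subsets of a Stein space `X` with `⋂ K_j = K`, then `h_{K_j,X} ↗ h_{K,X}` pointwise. -/
theorem relExtRaw_of_decreasing_compacts {X : Type*} [TopologicalSpace X] [T2Space X]
    [SecondCountableTopology X] (S : CSpace X) (hStein : IsSteinIn S univ)
    (K : ℕ → Set X) (hKcpt : ∀ j, IsCompact (K j)) (hKdec : Antitone K)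
    (Kinf : Set X) (hKinf : (⋂ j, K j) = Kinf) :
    ∀ z : X, (Monotone fun j => relExtRaw S (K j) univ z) ∧
      Tendsto (fun j => relExtRaw S (K j) univ z) atTop
        (𝓝 (relExtRaw S Kinf univ z)) := by
  obtain ⟨hmono, htendsto⟩ :=
    relExtRaw_of_decreasing_compacts_general S isOpen_univ hKcpt hKdec (subset_univ _)
  exact hKinf ▸ fun z => ⟨fun _ _ hij => hmono hij z, tendsto_pi_nhds.1 htendsto z⟩
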